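/- arXiv:2407.13401 — 6 statements merged into one kernel-verified Lean document; each statement's English description precedes it below -/
import Mathlib

section
/- Let G ∈ ℂ^{n×n} be Hermitian positive semidefinite, d, g ∈ ℂ^n, γ̃ ∈ ℝ, and define the constraint function q(u) = (uᴴ G u).re − 2·Re(gᴴ u). Suppose ε ≥ 0 is a real number, u* = (I + ε·G)⁻¹(d + ε·g), q(u*) ≤ γ̃, and the complementary slackness condition ε·(q(u*) − γ̃) = 0 holds. Then for every u ∈ ℂ^n with q(u) ≤ γ̃ one has ‖u* − d‖² ≤ ‖u − d‖². -/
open Matrix ComplexOrder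

/-- Squared Hermitian norm of a complex vector. -/
noncomputable def vnormSq {n : ℕ} (u : Fin n → ℂ) : ℝ := ∑ i, ‖u i‖ ^ 2

/-!
Completing the square, a quadratic `x ↦ Re ⟪x, A x⟫ - 2 Re ⟪b, x⟫` with `A` positive is minimized at
every solution of `A x = b`. Up to the constant `‖d‖²`, the Lagrangian `‖u - d‖² + ε q(u)` is such a
quadratic, with operator `I + εG` and vector `d + εg`, so `u*` minimizes it globally. At a feasible
`u` the multiplier term is at most `ε γ̃`, and by complementary slackness it equals `ε γ̃` at `u*`.
-/

open scoped InnerProductSpace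

theorem isMinOn_of_isMinOn_lagrangian {X R : Type*} [Ring R] [PartialOrder R] [IsOrderedRing R]
    {f q : X → R} {s : Set X} {x : X} {γ ε : R} (hε : 0 ≤ ε)
    (hs : ∀ y ∈ s, q y ≤ γ) (hcs : ε * (q x - γ) = 0)
    (hmin : IsMinOn (fun y ↦ f y + ε * q y) s x) : IsMinOn f s x := by
  have hslack : ε * q x = ε * γ := sub_eq_zero.mp ((mul_sub ε _ _).symm.trans hcs)
  refine isMinOn_iff.mpr fun y hy ↦ le_of_add_le_add_right (a := ε * γ) ?_
  calc
    f x + ε * γ = f x + ε * q x := by rw [hslack]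
    _ ≤ f y + ε * q y := isMinOn_iff.mp hmin y hy
    _ ≤ f y + ε * γ := by gcongr; exact hs y hy

section Quadratic

variable {𝕜 E : Type*} [RCLike 𝕜] [NormedAddCommGroup E] [InnerProductSpace 𝕜 E]

/-- The real-valued quadratic function with second-order part `T` and linear part `-2 Re ⟪b, ·⟫`,
the coordinate-free form of the constraint function `q`. The factor `-2` makes `T x = b` its
stationarity equation when `T` is symmetric. -/
noncomputable def quadFun (T : E →ₗ[𝕜] E) (b x : E) : ℝ :=
  RCLike.re ⟪x, T x⟫_𝕜 - 2 * RCLike.re ⟪b, x⟫_𝕜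

theorem quadFun_add_smul (S T : E →ₗ[𝕜] E) (a b x : E) (ε : ℝ) :
    quadFun (S + (ε : 𝕜) • T) (a + (ε : 𝕜) • b) x = quadFun S a x + ε * quadFun T b x := by
  simp only [quadFun, LinearMap.add_apply, LinearMap.smul_apply, inner_add_left, inner_add_right,
    inner_smul_left, inner_smul_right, RCLike.conj_ofReal, map_add, RCLike.re_ofReal_mul]
  ring

theorem norm_sub_sq_eq_quadFun_one_add (d x : E) :
    ‖x - d‖ ^ 2 = quadFun (1 : E →ₗ[𝕜] E) d x + ‖d‖ ^ 2 := by
  rw [norm_sub_sq (𝕜 := 𝕜), inner_re_symm, quadFun, Module.End.one_apply, inner_self_eq_norm_sq]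

theorem quadFun_eq_quadFun_add_re_inner {T : E →ₗ[𝕜] E} (hT : T.IsSymmetric) {b x : E}
    (hx : T x = b) (y : E) :
    quadFun T b y = quadFun T b x + RCLike.re ⟪y - x, T (y - x)⟫_𝕜 := by
  have hcross : RCLike.re ⟪y, T x⟫_𝕜 = RCLike.re ⟪x, T y⟫_𝕜 := by rw [← hT, inner_re_symm]
  simp only [quadFun, ← hx, hT _ _, map_sub, inner_sub_left, inner_sub_right, hcross]
  ring

theorem isMinOn_quadFun {T : E →ₗ[𝕜] E} (hT : T.IsPositive) {b x : E} (hx : T x = b) (s : Set E) :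
    IsMinOn (quadFun T b) s x := by
  refine isMinOn_iff.mpr fun y _ ↦ ?_
  rw [quadFun_eq_quadFun_add_re_inner hT.isSymmetric hx y]
  exact le_add_of_nonneg_right (hT.re_inner_nonneg_right _)

theorem qcqp1_kkt_sufficiency_general {T : E →ₗ[𝕜] E} {d g x : E} {γ ε : ℝ} (hε : 0 ≤ ε)
    (hT : (1 + (ε : 𝕜) • T).IsPositive) (hx : (1 + (ε : 𝕜) • T) x = d + (ε : 𝕜) • g)
    (hcs : ε * (quadFun T g x - γ) = 0) :
    IsMinOn (fun y ↦ ‖y - d‖ ^ 2) {y | quadFun T g y ≤ γ} x := by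
  have hlagrangian (y : E) : ‖y - d‖ ^ 2 + ε * quadFun T g y =
      quadFun (1 + (ε : 𝕜) • T) (d + (ε : 𝕜) • g) y + ‖d‖ ^ 2 := by
    rw [norm_sub_sq_eq_quadFun_one_add (𝕜 := 𝕜), quadFun_add_smul, add_right_comm]
  refine isMinOn_of_isMinOn_lagrangian hε (fun _ hy ↦ hy) hcs ?_
  simpa only [hlagrangian] using (isMinOn_quadFun hT hx _).add isMinOn_const

end Quadratic

section Matrix

variable {ι 𝕜 : Type*} [Fintype ι] [DecidableEq ι] [RCLike 𝕜]

theorem quadFun_toEuclideanLin (A : Matrix ι ι 𝕜) (b u : ι → 𝕜) :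
    quadFun A.toEuclideanLin (WithLp.toLp 2 b) (WithLp.toLp 2 u) =
      RCLike.re (star u ⬝ᵥ (A *ᵥ u)) - 2 * RCLike.re (star b ⬝ᵥ u) := by
  simp only [quadFun, toLpLin_toLp, toLin'_apply, EuclideanSpace.inner_toLp_toLp,
    dotProduct_comm _ (star _)]

theorem isPositive_one_add_smul_toEuclideanLin {G : Matrix ι ι 𝕜} (hG : G.PosSemidef) {c : 𝕜}
    (hc : 0 ≤ c) : (1 + c • G.toEuclideanLin).IsPositive :=
  LinearMap.isPositive_one.add ((isPositive_toEuclideanLin_iff.mpr hG).smul_of_nonneg hc)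

theorem one_add_smul_toEuclideanLin_inv_mulVec {G : Matrix ι ι 𝕜} (hG : G.PosSemidef) {c : 𝕜}
    (hc : 0 ≤ c) (b : ι → 𝕜) :
    (1 + c • G.toEuclideanLin) (WithLp.toLp 2 ((1 + c • G)⁻¹ *ᵥ b)) = WithLp.toLp 2 b := by
  have hunit : IsUnit (1 + c • G) := (PosDef.one.add_posSemidef (hG.smul hc)).isUnit
  have hlin : 1 + c • G.toEuclideanLin = (1 + c • G).toEuclideanLin := by
    rw [map_add, map_smul, toLpLin_one, Module.End.one_eq_id]
  rw [hlin, toLpLin_toLp, toLin'_apply, mulVec_mulVec,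
    mul_nonsing_inv _ ((isUnit_iff_isUnit_det _).mp hunit), one_mulVec]

end Matrix

theorem vnormSq_eq_norm_toLp_sq {n : ℕ} (u : Fin n → ℂ) : vnormSq u = ‖WithLp.toLp 2 u‖ ^ 2 :=
  (EuclideanSpace.norm_sq_eq _).symm

/-- KKT sufficiency for the convex QCQP with one constraint (Theorem 2 of the
paper): if `ε ≥ 0`, `u* = (I + εG)⁻¹(d + εg)` is feasible and complementary
slackness holds, then `u*` is a global minimizer of `‖u − d‖²` subject to
`q(u) ≤ γ̃`, where `q(u) = uᴴ G u − 2 Re(gᴴ u)`. -/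
theorem qcqp1_kkt_sufficiency {n : ℕ}
    (G : Matrix (Fin n) (Fin n) ℂ) (hG : G.PosSemidef)
    (d g : Fin n → ℂ) (γt : ℝ)
    (q : (Fin n → ℂ) → ℝ)
    (hq : ∀ u, q u = (star u ⬝ᵥ (G *ᵥ u)).re - 2 * (star g ⬝ᵥ u).re)
    (ε : ℝ) (hε : 0 ≤ ε)
    (ustar : Fin n → ℂ)
    (hustar : ustar = (1 + (ε : ℂ) • G)⁻¹ *ᵥ (d + (ε : ℂ) • g))
    (hfeas : q ustar ≤ γt)
    (hcs : ε * (q ustar - γt) = 0) :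
    ∀ u : Fin n → ℂ, q u ≤ γt → vnormSq (ustar - d) ≤ vnormSq (u - d) := by
  have hεc : (0 : ℂ) ≤ ε := Complex.zero_le_real.mpr hε
  have hquad (u : Fin n → ℂ) :
      q u = quadFun G.toEuclideanLin (WithLp.toLp 2 g) (WithLp.toLp 2 u) :=
    (hq u).trans (quadFun_toEuclideanLin G g u).symm
  simp only [hquad, vnormSq_eq_norm_toLp_sq] at hcs ⊢
  exact fun u hu ↦ qcqp1_kkt_sufficiency_general hε
    (isPositive_one_add_smul_toEuclideanLin hG hεc)
    (hustar ▸ one_add_smul_toEuclideanLin_inv_mulVec hG hεc _) hcs hu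
end

section
/- Let G ∈ ℂ^{n×n} be Hermitian positive semidefinite, d, g ∈ ℂ^n, and define q(u) = (uᴴ G u).re − 2·Re(gᴴ u). Then the function h : [0, ∞) → ℝ given by h(ε) = q((I + ε·G)⁻¹(d + ε·g)) is antitone (non-increasing): for all 0 ≤ ε₁ ≤ ε₂ one has h(ε₂) ≤ h(ε₁). -/
open Matrix ComplexOrder

/-! The vector `u(ε) = (I + εG)⁻¹(d + εg)` is the stationary point of the convex Lagrangian
`w ↦ ‖w - d‖² + ε q(w)`, hence its minimizer. Comparing `u(ε₁)` and `u(ε₂)` in both Lagrangians and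
adding the two inequalities leaves `(ε₂ - ε₁) (q(u(ε₁)) - q(u(ε₂))) ≥ 0`. -/

theorem antitoneOn_of_isMinOn_add_mul {R α : Type*} [CommRing R] [LinearOrder R]
    [IsStrictOrderedRing R] {f q : α → R} {x : R → α} {S : Set R} {s : Set α}
    (hxs : Set.MapsTo x S s) (hx : ∀ a ∈ S, IsMinOn (fun w ↦ f w + a * q w) s (x a)) :
    AntitoneOn (fun a ↦ q (x a)) S := by
  intro a ha b hb hab
  obtain rfl | hlt := hab.eq_or_lt
  · exact le_rfl
  have min_a : f (x a) + a * q (x a) ≤ f (x b) + a * q (x b) := hx a ha (hxs hb)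
  have min_b : f (x b) + b * q (x b) ≤ f (x a) + b * q (x a) := hx b hb (hxs ha)
  refine le_of_mul_le_mul_left ?_ (sub_pos.mpr hlt)
  linarith

section InnerProductSpace

open RCLike
open scoped InnerProductSpace

variable {𝕜 E : Type*} [RCLike 𝕜] [NormedAddCommGroup E] [InnerProductSpace 𝕜 E]

/-- The quadratic constraint function `q(u) = Re⟪u, T u⟫ - 2 Re⟪g, u⟫`, with an operator `T` in the
role of the matrix `G`. -/
noncomputable def constraintValue (T : E →ₗ[𝕜] E) (g u : E) : ℝ :=
  re ⟪u, T u⟫_𝕜 - 2 * re ⟪g, u⟫_𝕜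

/-- The Lagrangian, at multiplier `a`, of minimizing `‖w - d‖²` under a bound on
`constraintValue T g w`; the bound itself only adds a constant and is left out. -/
noncomputable def lagrangian (T : E →ₗ[𝕜] E) (d g : E) (a : ℝ) (w : E) : ℝ :=
  ‖w - d‖ ^ 2 + a * constraintValue T g w

variable {T : E →ₗ[𝕜] E}

theorem constraintValue_add (hT : T.IsSymmetric) (g u e : E) :
    constraintValue T g (u + e) =
      constraintValue T g u + 2 * re ⟪T u - g, e⟫_𝕜 + re ⟪e, T e⟫_𝕜 := by
  have cross : re ⟪e, T u⟫_𝕜 = re ⟪T u, e⟫_𝕜 := inner_re_symm e (T u)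
  simp only [constraintValue, map_add, inner_add_left, inner_add_right, inner_sub_left, map_sub,
    ← hT u e, cross]
  ring

theorem lagrangian_add_of_stationary (hT : T.IsSymmetric) {d g u : E} {a : ℝ}
    (hu : u + (a : 𝕜) • T u = d + (a : 𝕜) • g) (e : E) :
    lagrangian T d g a (u + e) = lagrangian T d g a u + (‖e‖ ^ 2 + a * re ⟪e, T e⟫_𝕜) := by
  have residual : u - d = -((a : 𝕜) • (T u - g)) := by
    rw [smul_sub, neg_sub, sub_eq_sub_iff_add_eq_add, hu, add_comm]
  have cross : re ⟪u - d, e⟫_𝕜 = -(a * re ⟪T u - g, e⟫_𝕜) := by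
    rw [residual, inner_neg_left, inner_smul_left, conj_ofReal, map_neg, re_ofReal_mul]
  rw [lagrangian, lagrangian, add_sub_right_comm, norm_add_sq (𝕜 := 𝕜), cross,
    constraintValue_add hT]
  ring

theorem isMinOn_lagrangian_of_stationary (hT : T.IsPositive) {d g u : E} {a : ℝ} (ha : 0 ≤ a)
    (hu : u + (a : 𝕜) • T u = d + (a : 𝕜) • g) :
    IsMinOn (lagrangian T d g a) Set.univ u := by
  refine isMinOn_univ_iff.mpr fun w ↦ ?_
  have expansion := lagrangian_add_of_stationary hT.isSymmetric hu (w - u)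
  rw [add_sub_cancel] at expansion
  rw [expansion]
  exact le_add_of_nonneg_right <|
    add_nonneg (sq_nonneg _) (mul_nonneg ha (hT.re_inner_nonneg_right (w - u)))

theorem antitoneOn_constraintValue_of_stationary (hT : T.IsPositive) {d g : E} {u : ℝ → E}
    (hu : ∀ a : ℝ, 0 ≤ a → u a + (a : 𝕜) • T (u a) = d + (a : 𝕜) • g) :
    AntitoneOn (fun a ↦ constraintValue T g (u a)) (Set.Ici 0) :=
  antitoneOn_of_isMinOn_add_mul (Set.mapsTo_univ u _) fun a ha ↦
    isMinOn_lagrangian_of_stationary hT ha (hu a ha)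

end InnerProductSpace

section Matrix

open RCLike WithLp

variable {𝕜 n : Type*} [RCLike 𝕜] [Fintype n] [DecidableEq n]

theorem constraintValue_toEuclideanLin (G : Matrix n n 𝕜) (g u : n → 𝕜) :
    constraintValue (toEuclideanLin G) (toLp 2 g) (toLp 2 u) =
      re (star u ⬝ᵥ G *ᵥ u) - 2 * re (star g ⬝ᵥ u) := by
  simp only [constraintValue, toLpLin_toLp, toLin'_apply, EuclideanSpace.inner_toLp_toLp,
    dotProduct_comm _ (star _)]

variable {G : Matrix n n 𝕜}

theorem isUnit_one_add_smul_of_posSemidef (hG : G.PosSemidef) {a : ℝ} (ha : 0 ≤ a) :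
    IsUnit (1 + (a : 𝕜) • G) :=
  (PosDef.one.add_posSemidef (hG.smul (ofReal_nonneg.mpr ha))).isUnit

theorem stationary_one_add_smul_inv_mulVec (hG : G.PosSemidef) {a : ℝ} (ha : 0 ≤ a)
    (v : n → 𝕜) :
    (1 + (a : 𝕜) • G)⁻¹ *ᵥ v + (a : 𝕜) • G *ᵥ ((1 + (a : 𝕜) • G)⁻¹ *ᵥ v) = v := by
  have det_unit := (isUnit_iff_isUnit_det _).mp (isUnit_one_add_smul_of_posSemidef hG ha)
  calc
    _ = (1 + (a : 𝕜) • G) *ᵥ ((1 + (a : 𝕜) • G)⁻¹ *ᵥ v) := by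
      rw [add_mulVec, one_mulVec, smul_mulVec]
    _ = v := by rw [mulVec_mulVec, mul_nonsing_inv _ det_unit, one_mulVec]

theorem multiplier_path_antitone_general (hG : G.PosSemidef) (d g : n → 𝕜) (q : (n → 𝕜) → ℝ)
    (hq : ∀ u, q u = re (star u ⬝ᵥ G *ᵥ u) - 2 * re (star g ⬝ᵥ u)) :
    AntitoneOn (fun ε : ℝ ↦ q ((1 + (ε : 𝕜) • G)⁻¹ *ᵥ (d + (ε : 𝕜) • g))) (Set.Ici 0) := by
  simp only [hq, ← constraintValue_toEuclideanLin]
  refine antitoneOn_constraintValue_of_stationary (d := toLp 2 d)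
    (isPositive_toEuclideanLin_iff.mpr hG) fun ε hε ↦ ?_
  exact congrArg (toLp 2) (stationary_one_add_smul_inv_mulVec hG hε (d + (ε : 𝕜) • g))

end Matrix

/-- Monotonicity of the constraint value along the Lagrange-multiplier path
(Appendix E of the paper): with `G` Hermitian PSD,
`h(ε) = q((I + εG)⁻¹(d + εg))` is non-increasing on `[0, ∞)`, where
`q(u) = uᴴ G u − 2 Re(gᴴ u)`. -/
theorem multiplier_path_antitone {n : ℕ}
    (G : Matrix (Fin n) (Fin n) ℂ) (hG : G.PosSemidef)
    (d g : Fin n → ℂ)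
    (q : (Fin n → ℂ) → ℝ)
    (hq : ∀ u, q u = (star u ⬝ᵥ (G *ᵥ u)).re - 2 * (star g ⬝ᵥ u).re)
    (h : ℝ → ℝ)
    (hh : ∀ ε : ℝ, h ε = q ((1 + (ε : ℂ) • G)⁻¹ *ᵥ (d + (ε : ℂ) • g))) :
    ∀ ε₁ ε₂ : ℝ, 0 ≤ ε₁ → ε₁ ≤ ε₂ → h ε₂ ≤ h ε₁ := by
  intro ε₁ ε₂ h₁ h₁₂
  rw [hh, hh]
  exact multiplier_path_antitone_general hG d g q hq h₁ (h₁.trans h₁₂) h₁₂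
end

section
/- Let W ∈ ℂ^{m×n} be a matrix with W_{ij} ≠ 0 for all i, j, and define F* ∈ ℂ^{m×n} by [F*]_{ij} = −W_{ij}/|W_{ij}|. Then |[F*]_{ij}| = 1 for all i, j; Re Tr((F*)ᴴ W) = −Σ_{i,j} |W_{ij}|; and for every F ∈ ℂ^{m×n} with |F_{ij}| = 1 for all i, j one has Re Tr((F*)ᴴ W) ≤ Re Tr(Fᴴ W). -/
open Matrix

/-!
The pairing `Tr(Fᴴ W) = ∑ conj(F_{ij}) W_{ij}` separates over the entries. By the triangle
inequality its modulus is at most `∑ |F_{ij}| |W_{ij}|`, so on the polydisc `|F_{ij}| ≤ 1` its real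
part is at least `-∑ |W_{ij}|`. Taking every `F_{ij}` opposite in phase to `W_{ij}` turns each term
into `-|W_{ij}|`, which attains this bound at a point with all entries of modulus one.
-/

section Trace

variable {m n R : Type*} [Fintype m] [Fintype n]

theorem trace_conjTranspose_mul_eq_sum [AddCommMonoid R] [Mul R] [Star R] (A B : Matrix m n R) :
    (Aᴴ * B).trace = ∑ i, ∑ j, star (A i j) * B i j := by
  simp only [trace, diag_apply, mul_apply, conjTranspose_apply]
  exact Finset.sum_comm

theorem norm_trace_conjTranspose_mul_le [NonUnitalSeminormedRing R] [StarAddMonoid R]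
    [NormedStarGroup R] (A B : Matrix m n R) :
    ‖(Aᴴ * B).trace‖ ≤ ∑ i, ∑ j, ‖A i j‖ * ‖B i j‖ := by
  rw [trace_conjTranspose_mul_eq_sum]
  refine norm_sum_le_of_le _ fun i _ ↦ norm_sum_le_of_le _ fun j _ ↦ ?_
  simpa only [norm_star] using norm_mul_le (star (A i j)) (B i j)

end Trace

section UnitModulus

variable {𝕜 : Type*} [RCLike 𝕜]

theorem norm_neg_div_norm {w : 𝕜} (hw : w ≠ 0) : ‖-w / (‖w‖ : 𝕜)‖ = 1 := by
  rw [norm_div, norm_neg, RCLike.norm_ofReal, abs_norm, div_self (norm_ne_zero_iff.mpr hw)]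

theorem star_neg_div_norm_mul_self (w : 𝕜) : star (-w / (‖w‖ : 𝕜)) * w = -(‖w‖ : 𝕜) :=
  calc star (-w / (‖w‖ : 𝕜)) * w
    _ = -(star w * w / (‖w‖ : 𝕜)) := by
      simp only [star_div₀, star_neg, RCLike.star_def, RCLike.conj_ofReal, neg_div, neg_mul,
        div_mul_eq_mul_div]
    _ = -(‖w‖ : 𝕜) := by
      rw [RCLike.star_def, RCLike.conj_mul, sq, mul_self_div_self]

variable {m n : Type*} [Fintype m] [Fintype n]

theorem neg_sum_norm_le_re_trace_conjTranspose_mul {F : Matrix m n 𝕜} (hF : ∀ i j, ‖F i j‖ ≤ 1)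
    (W : Matrix m n 𝕜) : -∑ i, ∑ j, ‖W i j‖ ≤ RCLike.re (Fᴴ * W).trace := by
  have norm_le : ‖(Fᴴ * W).trace‖ ≤ ∑ i, ∑ j, ‖W i j‖ :=
    (norm_trace_conjTranspose_mul_le F W).trans <| Finset.sum_le_sum fun i _ ↦
      Finset.sum_le_sum fun j _ ↦ mul_le_of_le_one_left (norm_nonneg _) (hF i j)
  exact neg_le_of_abs_le ((RCLike.abs_re_le_norm _).trans norm_le)

theorem trace_conjTranspose_mul_of_eq_neg_div_norm {F W : Matrix m n 𝕜}
    (hF : ∀ i j, F i j = -W i j / (‖W i j‖ : 𝕜)) :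
    (Fᴴ * W).trace = ((-∑ i, ∑ j, ‖W i j‖ : ℝ) : 𝕜) := by
  simp only [trace_conjTranspose_mul_eq_sum, hF, star_neg_div_norm_mul_self,
    Finset.sum_neg_distrib, RCLike.ofReal_neg, RCLike.ofReal_sum]

theorem constant_modulus_linear_min_general (W : Matrix m n 𝕜) (hW : ∀ i j, W i j ≠ 0)
    (Fstar : Matrix m n 𝕜) (hF : ∀ i j, Fstar i j = -W i j / (‖W i j‖ : 𝕜)) :
    (∀ i j, ‖Fstar i j‖ = 1) ∧
    RCLike.re (Fstarᴴ * W).trace = -∑ i, ∑ j, ‖W i j‖ ∧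
    ∀ F : Matrix m n 𝕜, (∀ i j, ‖F i j‖ ≤ 1) →
      RCLike.re (Fstarᴴ * W).trace ≤ RCLike.re (Fᴴ * W).trace := by
  have value : RCLike.re (Fstarᴴ * W).trace = -∑ i, ∑ j, ‖W i j‖ := by
    rw [trace_conjTranspose_mul_of_eq_neg_div_norm hF, RCLike.ofReal_re]
  refine ⟨fun i j ↦ ?_, value, fun F hF_le ↦ ?_⟩
  · rw [hF, norm_neg_div_norm (hW i j)]
  · exact value.trans_le (neg_sum_norm_le_re_trace_conjTranspose_mul hF_le W)

end UnitModulus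

/-- Theorem 3 of the paper (core step): the constant-modulus matrix
`F* = −exp(j∠W)`, i.e. `[F*]_{ij} = −W_{ij}/|W_{ij}|`, minimizes
`Re Tr(Fᴴ W)` over all matrices with unit-modulus entries, attaining the
value `−Σ_{i,j} |W_{ij}|`. -/
theorem constant_modulus_linear_min {m n : ℕ}
    (W : Matrix (Fin m) (Fin n) ℂ) (hW : ∀ i j, W i j ≠ 0)
    (Fstar : Matrix (Fin m) (Fin n) ℂ)
    (hF : ∀ i j, Fstar i j = -(W i j) / (‖W i j‖ : ℂ)) :
    (∀ i j, ‖Fstar i j‖ = 1) ∧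
    ((Fstar.conjTranspose * W).trace).re = -∑ i, ∑ j, ‖W i j‖ ∧
    ∀ F : Matrix (Fin m) (Fin n) ℂ, (∀ i j, ‖F i j‖ = 1) →
      ((Fstar.conjTranspose * W).trace).re ≤ ((F.conjTranspose * W).trace).re := by
  obtain ⟨modulus, value, minimal⟩ := constant_modulus_linear_min_general W hW Fstar hF
  exact ⟨modulus, value, fun F hF_one ↦ minimal F fun i j ↦ (hF_one i j).le⟩
end

section
/- Let E be a real inner product space, f : E → ℝ differentiable with gradient ∇f Lipschitz continuous with constant α ≥ 0, g : E → ℝ an arbitrary function, X ⊆ E a subset, and T₀ ∈ X. Define the surrogate S(T) = f(T₀) + ⟪∇f(T₀), T − T₀⟫ + (α/2)‖T − T₀‖² + g(T). If T₁ ∈ X satisfies S(T₁) ≤ S(T) for all T ∈ X, then f(T₁) + g(T₁) ≤ f(T₀) + g(T₀). -/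
open RealInnerProductSpace

section TaylorBound

variable {F : Type*} [NormedAddCommGroup F] [NormedSpace ℝ F]

theorem norm_image_sub_sub_smul_le_of_norm_deriv_right_sub_le {φ φ' : ℝ → F} {a b C : ℝ}
    (hab : a ≤ b) (hcont : ContinuousOn φ (Set.Icc a b))
    (hderiv : ∀ t ∈ Set.Ico a b, HasDerivWithinAt φ (φ' t) (Set.Ici t) t)
    (hbound : ∀ t ∈ Set.Ico a b, ‖φ' t - φ' a‖ ≤ C * (t - a)) :
    ‖φ b - φ a - (b - a) • φ' a‖ ≤ C / 2 * (b - a) ^ 2 := by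
  have hquad (t : ℝ) :
      HasDerivAt (fun u : ℝ => C / 2 * (u - a) ^ 2) (C * (t - a)) t :=
    ((((hasDerivAt_id' t).sub_const a).pow 2).const_mul (C / 2)).congr_deriv (by
      push_cast; ring)
  have hremainder (t : ℝ) (ht : t ∈ Set.Ico a b) :
      HasDerivWithinAt (fun u => φ u - φ a - (u - a) • φ' a) (φ' t - φ' a) (Set.Ici t) t := by
    have hlinear : HasDerivWithinAt (fun u : ℝ => (u - a) • φ' a) (φ' a) (Set.Ici t) t := by
      simpa only [one_smul] using
        ((hasDerivAt_id' t).hasDerivWithinAt.sub_const a).smul_const (φ' a)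
    exact ((hderiv t ht).sub_const (φ a)).fun_sub hlinear
  -- Comparing derivatives, rather than integrating `φ'`, avoids assuming `φ'` integrable
  -- and `F` complete.
  exact image_norm_le_of_norm_deriv_right_le_deriv_boundary
    (by fun_prop) hremainder (by simp) hquad hbound (Set.right_mem_Icc.mpr hab)

variable {E : Type*} [NormedAddCommGroup E] [NormedSpace ℝ E]

theorem norm_image_sub_sub_le_of_norm_hasFDerivWithinAt_sub_le {f : E → F} {f' : E → E →L[ℝ] F}
    {s : Set E} {x y : E} {α : ℝ} (hs : StarConvex ℝ x s) (hy : y ∈ s)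
    (hderiv : ∀ z ∈ s, HasFDerivWithinAt f (f' z) s z)
    (hlip : ∀ z ∈ s, ‖f' z - f' x‖ ≤ α * ‖z - x‖) :
    ‖f y - f x - f' x (y - x)‖ ≤ α / 2 * ‖y - x‖ ^ 2 := by
  set v := y - x with hv
  have hmaps : Set.MapsTo (fun t : ℝ => x + t • v) (Set.Icc 0 1) s :=
    fun t ht => hs.add_smul_sub_mem hy ht.1 ht.2
  have hline (t : ℝ) (ht : t ∈ Set.Icc (0 : ℝ) 1) :
      HasDerivWithinAt (fun u : ℝ => f (x + u • v)) (f' (x + t • v) v) (Set.Icc 0 1) t := by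
    have hpath : HasDerivWithinAt (fun u : ℝ => x + u • v) v (Set.Icc 0 1) t := by
      simpa only [one_smul] using ((hasDerivAt_id' t).hasDerivWithinAt.smul_const v).const_add x
    exact (hderiv _ (hmaps ht)).comp_hasDerivWithinAt t hpath hmaps
  have hslope (t : ℝ) (ht : t ∈ Set.Ico (0 : ℝ) 1) :
      ‖f' (x + t • v) v - f' (x + (0 : ℝ) • v) v‖ ≤ α * ‖v‖ ^ 2 * (t - 0) :=
    calc ‖f' (x + t • v) v - f' (x + (0 : ℝ) • v) v‖
        = ‖(f' (x + t • v) - f' x) v‖ := by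
          rw [zero_smul, add_zero, sub_apply]
      _ ≤ α * ‖x + t • v - x‖ * ‖v‖ :=
          ContinuousLinearMap.le_of_opNorm_le _ (hlip _ (hmaps ⟨ht.1, ht.2.le⟩)) v
      _ = α * ‖v‖ ^ 2 * (t - 0) := by
          rw [add_sub_cancel_left, norm_smul, Real.norm_of_nonneg ht.1]
          ring
  have htaylor := norm_image_sub_sub_smul_le_of_norm_deriv_right_sub_le zero_le_one
    (fun t ht => (hline t ht).continuousWithinAt)
    (fun t ht => (hline t ⟨ht.1, ht.2.le⟩).mono_of_mem_nhdsWithin (Icc_mem_nhdsGE_of_mem ht))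
    hslope
  calc ‖f y - f x - f' x v‖ ≤ α * ‖v‖ ^ 2 / 2 := by simpa [hv] using htaylor
    _ = α / 2 * ‖v‖ ^ 2 := by ring

end TaylorBound

section Descent

variable {E : Type*} [NormedAddCommGroup E] [NormedSpace ℝ E] {f : E → ℝ}
  {f' : E → StrongDual ℝ E} {s : Set E} {α : ℝ}

theorem le_quadratic_model_of_norm_hasFDerivWithinAt_sub_le {x y : E}
    (hs : StarConvex ℝ x s) (hy : y ∈ s) (hderiv : ∀ z ∈ s, HasFDerivWithinAt f (f' z) s z)
    (hlip : ∀ z ∈ s, ‖f' z - f' x‖ ≤ α * ‖z - x‖) :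
    f y ≤ f x + f' x (y - x) + α / 2 * ‖y - x‖ ^ 2 := by
  have hremainder := (Real.le_norm_self _).trans
    (norm_image_sub_sub_le_of_norm_hasFDerivWithinAt_sub_le hs hy hderiv hlip)
  linarith

theorem prox_grad_descent_general {g S : E → ℝ} {T₀ T₁ : E}
    (hs : StarConvex ℝ T₀ s) (hT₁ : T₁ ∈ s)
    (hderiv : ∀ x ∈ s, HasFDerivWithinAt f (f' x) s x)
    (hlip : ∀ x ∈ s, ‖f' x - f' T₀‖ ≤ α * ‖x - T₀‖)
    (hS : ∀ T, S T = f T₀ + f' T₀ (T - T₀) + α / 2 * ‖T - T₀‖ ^ 2 + g T)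
    (hle : S T₁ ≤ S T₀) :
    f T₁ + g T₁ ≤ f T₀ + g T₀ :=
  calc f T₁ + g T₁ ≤ S T₁ := by
        rw [hS]
        gcongr
        exact le_quadratic_model_of_norm_hasFDerivWithinAt_sub_le hs hT₁ hderiv hlip
    _ ≤ S T₀ := hle
    _ = f T₀ + g T₀ := by simp [hS]

end Descent

/-- Proximal-gradient descent step of the PANDA framework (Lemma 2, first
property): minimizing the locally tight upper bound
`S(T) = f(T₀) + ⟪∇f(T₀), T − T₀⟫ + (α/2)‖T − T₀‖² + g(T)` over the feasible
set `X ∋ T₀` does not increase `f + g`. -/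
theorem prox_grad_descent {E : Type*} [NormedAddCommGroup E] [InnerProductSpace ℝ E]
    (f : E → ℝ) (f' : E → E) (α : ℝ) (hα : 0 ≤ α)
    (hderiv : ∀ x : E, HasFDerivAt f (innerSL ℝ (f' x)) x)
    (hlip : ∀ x y : E, ‖f' x - f' y‖ ≤ α * ‖x - y‖)
    (g : E → ℝ) (X : Set E) (T₀ : E) (hT₀ : T₀ ∈ X)
    (S : E → ℝ)
    (hS : ∀ T, S T = f T₀ + ⟪f' T₀, T - T₀⟫ + α / 2 * ‖T - T₀‖ ^ 2 + g T)
    (T₁ : E) (hT₁ : T₁ ∈ X) (hmin : ∀ T ∈ X, S T₁ ≤ S T) :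
    f T₁ + g T₁ ≤ f T₀ + g T₀ :=
  prox_grad_descent_general (starConvex_univ T₀) (Set.mem_univ T₁)
    (fun x _ => (hderiv x).hasFDerivWithinAt)
    (fun x _ => by simpa only [← map_sub, innerSL_apply_norm] using hlip x T₀)
    hS (hmin T₀ hT₀)
end

section
/- For all real numbers γ ≥ 0 and r > −1, one has log(1 + r) − r + (1 + r)·γ/(1 + γ) ≤ log(1 + γ), with equality if and only if r = γ. -/
/-!
In terms of the ratio `t = (1 + r) / (1 + γ)`, the surrogate falls short of `log (1 + γ)` by exactly
`t - 1 - log t`. This gap is nonnegative and vanishes only at `t = 1`, where the graph of `log`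
touches its tangent line.
-/

theorem log_eq_sub_one_iff_of_pos {x : ℝ} (hx : 0 < x) : Real.log x = x - 1 ↔ x = 1 := by
  refine ⟨fun h => ?_, fun h => by simp [h]⟩
  by_contra hne
  exact (Real.log_lt_sub_one_of_pos hx hne).ne h

theorem lagrangian_dual_surrogate_eq_log_sub_gap {γ r : ℝ} (hγ : 1 + γ ≠ 0) (hr : 1 + r ≠ 0) :
    Real.log (1 + r) - r + (1 + r) * γ / (1 + γ) =
      Real.log (1 + γ) - ((1 + r) / (1 + γ) - 1 - Real.log ((1 + r) / (1 + γ))) := by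
  rw [Real.log_div hr hγ]
  field_simp
  ring

theorem lagrangian_dual_transform_general {γ r : ℝ} (hγ : -1 < γ) (hr : -1 < r) :
    Real.log (1 + r) - r + (1 + r) * γ / (1 + γ) ≤ Real.log (1 + γ) ∧
    (Real.log (1 + r) - r + (1 + r) * γ / (1 + γ) = Real.log (1 + γ) ↔ r = γ) := by
  have hγ_pos : 0 < 1 + γ := by linarith
  have hr_pos : 0 < 1 + r := by linarith
  have ratio_pos : 0 < (1 + r) / (1 + γ) := div_pos hr_pos hγ_pos
  rw [lagrangian_dual_surrogate_eq_log_sub_gap hγ_pos.ne' hr_pos.ne']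
  constructor
  · exact sub_le_self _ (sub_nonneg.mpr (Real.log_le_sub_one_of_pos ratio_pos))
  · rw [sub_eq_self, sub_eq_zero, eq_comm, log_eq_sub_one_iff_of_pos ratio_pos,
      div_eq_one_iff_eq hγ_pos.ne', add_right_inj]

/-- Lagrangian dual transform identity (Proposition 2 of the paper): for
`γ ≥ 0` and `r > −1`, `log(1+r) − r + (1+r)γ/(1+γ) ≤ log(1+γ)`, with equality
iff `r = γ`. -/
theorem lagrangian_dual_transform (γ r : ℝ) (hγ : 0 ≤ γ) (hr : -1 < r) :
    Real.log (1 + r) - r + (1 + r) * γ / (1 + γ) ≤ Real.log (1 + γ) ∧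
    (Real.log (1 + r) - r + (1 + r) * γ / (1 + γ) = Real.log (1 + γ) ↔ r = γ) :=
  lagrangian_dual_transform_general (neg_one_lt_zero.trans_le hγ) hr
end

section
/- Let w, D be real numbers with w > 0 and D > 0, and s ∈ ℂ. Then for all real r ≥ 0 and all η ∈ ℂ: w·log(1 + r) − w·r + 2·√(w·(1 + r))·Re(conj(η)·s) − |η|²·(|s|² + D) ≤ w·log(1 + |s|²/D). Moreover, equality holds for r = |s|²/D and η = √(w·(1 + r))·s/(|s|² + D). -/
/-!
Completing the square in `η` and writing the logarithmic gap in terms of the ratio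
`ρ = (1 + r) / (1 + ‖s‖ ^ 2 / D)` turns the surrogate into the weighted rate minus two losses,
`w * (ρ - 1 - log ρ)` and `(‖s‖ ^ 2 + D) * ‖η - η₀‖ ^ 2`, with `η₀` the optimal `η` for the
given `r`. Both are nonnegative, and they vanish at `ρ = 1` and `η = η₀` respectively.
-/

section FractionalProgramming

open scoped RealInnerProductSpace

variable {E : Type*} [SeminormedAddCommGroup E] [InnerProductSpace ℝ E]

/-- The fractional-programming surrogate of the weighted rate `w * log (1 + ‖s‖ ^ 2 / D)`, with
Lagrangian dual variable `r` and quadratic transform variable `η`. Only the real part of the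
pairing of `η` with `s` enters, so a real inner product suffices: on `ℂ` it is
`Re (conj η * s)`. -/
noncomputable def fpSurrogate (w D : ℝ) (s : E) (r : ℝ) (η : E) : ℝ :=
  w * Real.log (1 + r) - w * r + 2 * √(w * (1 + r)) * ⟪η, s⟫ - ‖η‖ ^ 2 * (‖s‖ ^ 2 + D)

theorem quadratic_transform_eq_sub_norm_sq {T : ℝ} (hT : T ≠ 0) (a : ℝ) (s η : E) :
    2 * a * ⟪η, s⟫ - ‖η‖ ^ 2 * T = a ^ 2 * (‖s‖ ^ 2 / T) - T * ‖η - (a / T) • s‖ ^ 2 := by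
  rw [norm_sub_sq_real, inner_smul_right, norm_smul, mul_pow, Real.norm_eq_abs, sq_abs]
  field_simp
  ring

theorem lagrangian_dual_transform_eq_sub {r γ : ℝ} (hr : 1 + r ≠ 0) (hγ : 1 + γ ≠ 0) :
    Real.log (1 + r) - r + (1 + r) * (γ / (1 + γ)) =
      Real.log (1 + γ) - ((1 + r) / (1 + γ) - 1 - Real.log ((1 + r) / (1 + γ))) := by
  rw [Real.log_div hr hγ]
  field_simp
  ring

theorem fpSurrogate_eq_sub_losses {w D r : ℝ} (hw : 0 ≤ w) (hD : 0 < D) (hr : -1 < r)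
    (s η : E) :
    fpSurrogate w D s r η =
      w * Real.log (1 + ‖s‖ ^ 2 / D)
        - w * ((1 + r) / (1 + ‖s‖ ^ 2 / D) - 1 - Real.log ((1 + r) / (1 + ‖s‖ ^ 2 / D)))
        - (‖s‖ ^ 2 + D) * ‖η - (√(w * (1 + r)) / (‖s‖ ^ 2 + D)) • s‖ ^ 2 := by
  have one_add_r_pos : 0 < 1 + r := by linarith
  have total_power_pos : 0 < ‖s‖ ^ 2 + D := by positivity
  have sinr_ratio : ‖s‖ ^ 2 / D / (1 + ‖s‖ ^ 2 / D) = ‖s‖ ^ 2 / (‖s‖ ^ 2 + D) := by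
    field_simp
    ring
  have quadratic := quadratic_transform_eq_sub_norm_sq total_power_pos.ne' √(w * (1 + r)) s η
  have lagrangian := lagrangian_dual_transform_eq_sub (γ := ‖s‖ ^ 2 / D) one_add_r_pos.ne'
    (by positivity)
  rw [Real.sq_sqrt (by positivity)] at quadratic
  rw [sinr_ratio] at lagrangian
  rw [fpSurrogate]
  linear_combination quadratic + w * lagrangian

theorem fpSurrogate_le {w D r : ℝ} (hw : 0 ≤ w) (hD : 0 < D) (hr : -1 < r) (s η : E) :
    fpSurrogate w D s r η ≤ w * Real.log (1 + ‖s‖ ^ 2 / D) := by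
  have one_add_r_pos : 0 < 1 + r := by linarith
  have log_loss_nonneg :
      0 ≤ (1 + r) / (1 + ‖s‖ ^ 2 / D) - 1 - Real.log ((1 + r) / (1 + ‖s‖ ^ 2 / D)) :=
    sub_nonneg.2 (Real.log_le_sub_one_of_pos (by positivity))
  rw [fpSurrogate_eq_sub_losses hw hD hr, sub_sub]
  exact sub_le_self _ (by positivity)

theorem fpSurrogate_eq {w D : ℝ} (hw : 0 ≤ w) (hD : 0 < D) (s : E) :
    fpSurrogate w D s (‖s‖ ^ 2 / D) ((√(w * (1 + ‖s‖ ^ 2 / D)) / (‖s‖ ^ 2 + D)) • s) =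
      w * Real.log (1 + ‖s‖ ^ 2 / D) := by
  have sinr_nonneg : 0 ≤ ‖s‖ ^ 2 / D := by positivity
  have ratio_eq_one : (1 + ‖s‖ ^ 2 / D) / (1 + ‖s‖ ^ 2 / D) = 1 := div_self (by positivity)
  rw [fpSurrogate_eq_sub_losses hw hD (by linarith), ratio_eq_one]
  simp

theorem weighted_rate_fp_reformulation_general {w D : ℝ} (hw : 0 ≤ w) (hD : 0 < D) (s : E) :
    (∀ r : ℝ, -1 < r → ∀ η : E, fpSurrogate w D s r η ≤ w * Real.log (1 + ‖s‖ ^ 2 / D)) ∧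
    (∀ r : ℝ, r = ‖s‖ ^ 2 / D → ∀ η : E, η = (√(w * (1 + r)) / (‖s‖ ^ 2 + D)) • s →
      fpSurrogate w D s r η = w * Real.log (1 + ‖s‖ ^ 2 / D)) := by
  refine ⟨fun r hr η ↦ fpSurrogate_le hw hD hr s η, ?_⟩
  rintro _ rfl _ rfl
  exact fpSurrogate_eq hw hD s

end FractionalProgramming

/-- Per-user form of Proposition 2 of the paper: fractional-programming
reformulation of the weighted rate `w log(1 + |s|²/D)` via the Lagrangian dual
transform (auxiliary `r`) and the quadratic transform (auxiliary `η`). The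
surrogate is upper bounded by the weighted rate, with equality at
`r = |s|²/D` and `η = √(w(1+r)) s/(|s|² + D)`. -/
theorem weighted_rate_fp_reformulation (w D : ℝ) (hw : 0 < w) (hD : 0 < D) (s : ℂ) :
    (∀ r : ℝ, 0 ≤ r → ∀ η : ℂ,
      w * Real.log (1 + r) - w * r
        + 2 * Real.sqrt (w * (1 + r)) * ((starRingEnd ℂ) η * s).re
        - ‖η‖ ^ 2 * (‖s‖ ^ 2 + D)
      ≤ w * Real.log (1 + ‖s‖ ^ 2 / D)) ∧
    (∀ r : ℝ, r = ‖s‖ ^ 2 / D →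
      ∀ η : ℂ, η = ((Real.sqrt (w * (1 + r)) / (‖s‖ ^ 2 + D) : ℝ) : ℂ) * s →
        w * Real.log (1 + r) - w * r
          + 2 * Real.sqrt (w * (1 + r)) * ((starRingEnd ℂ) η * s).re
          - ‖η‖ ^ 2 * (‖s‖ ^ 2 + D)
        = w * Real.log (1 + ‖s‖ ^ 2 / D)) := by
  have general := weighted_rate_fp_reformulation_general hw.le hD s
  simp only [fpSurrogate, Complex.inner, mul_comm s, Complex.real_smul] at general
  exact ⟨fun r hr ↦ general.1 r (by linarith), general.2⟩
end
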